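/- Let r ∈ (0,1] and let f : 𝔹 → ℂ be holomorphic and F(x) = f(x)·x for x ∈ 𝔹. Then F is biholomorphic on B_r if and only if for every u ∈ X with ‖u‖ = 1 the function f_u(ζ) = ζ·f(ζu) is univalent (injective and holomorphic) on 𝕌_r. -/

import Mathlib

open Metric Set

noncomputable section

/-- A holomorphic map is biholomorphic on an open set `s` if it is holomorphic and injective
on `s` and admits a holomorphic inverse on the image `f '' s`. -/
def IsBiholoOn {E₁ E₂ : Type*} [NormedAddCommGroup E₁] [NormedSpace ℂ E₁]
    [NormedAddCommGroup E₂] [NormedSpace ℂ E₂] (f : E₁ → E₂) (s : Set E₁) : Prop :=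
  DifferentiableOn ℂ f s ∧ Set.InjOn f s ∧
    ∃ g : E₂ → E₁, DifferentiableOn ℂ g (f '' s) ∧ ∀ x ∈ s, g (f x) = x

/- If every slice `f_u` is univalent then its derivative does not vanish. At `ζ = 0` this says
`f 0 ≠ 0`, and then injectivity of the slices gives `f x ≠ 0` for all `x` and the injectivity of
`F x = f x • x`, because `F x = F y` forces `x` and `y` onto the same line. At `x = ζ u` it says
`f x + f'(x) x ≠ 0`, which is exactly what makes the rank-one perturbation
`F'(x) = f x • id + f'(x)(·) x` of a scalar invertible. The openness of `F` comes from Hurwitz's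
theorem rather than from the inverse function theorem: the equation `F z = v` lives on the line
through `v`, so it is a one-variable equation depending continuously on `v`. -/

open Filter Topology

section OpenMaps

variable {E : Type*} [TopologicalSpace E]

theorem exists_openPartialHomeomorph_of_injOn {E' : Type*} [TopologicalSpace E'] [Nonempty E]
    {f : E → E'} {s : Set E} (hs : IsOpen s) (hc : ContinuousOn f s) (hi : InjOn f s)
    (ho : ∀ x ∈ s, 𝓝 (f x) ≤ map f (𝓝 x)) :
    ∃ e : OpenPartialHomeomorph E E', ⇑e = f ∧ e.source = s := by
  have hopen : IsOpenMap (s.domRestrict f) := isOpenMap_iff_nhds_le.2 fun x => by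
    have hmap : map (s.domRestrict f) (𝓝 x) = map f (𝓝 (x : E)) := by
      rw [← map_nhds_subtype_coe_eq_nhds x.2 (hs.mem_nhds x.2), map_map]
      rfl
    exact hmap ▸ ho x x.2
  exact ⟨.ofContinuousOpenRestrict hi.toPartialEquiv hc hopen hs, rfl, rfl⟩

theorem not_eventually_eq_of_injOn {E' : Type*} {f : E → E'} {s : Set E} {z : E} [NeBot (𝓝[≠] z)]
    (hs : s ∈ 𝓝 z) (hi : InjOn f s) : ¬ ∀ᶠ w in 𝓝 z, f w = f z := by
  intro h
  have hnear : ∀ᶠ w in 𝓝[≠] z, w ∈ s ∧ f w = f z := nhdsWithin_le_nhds (inter_mem hs h)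
  obtain ⟨w, ⟨hw, hfw⟩, hwz⟩ := (hnear.and self_mem_nhdsWithin).exists
  exact hwz (hi hw (mem_of_mem_nhds hs) hfw)

theorem exists_pos_eventually_forall_lt_of_isCompact {K : Set E} {Y : Type*} [TopologicalSpace Y]
    (hK : IsCompact K) {h : Y × E → ℝ} {y₀ : Y} (hc : ∀ z ∈ K, ContinuousAt h (y₀, z))
    (hpos : ∀ z ∈ K, 0 < h (y₀, z)) :
    ∃ c > 0, ∀ᶠ y in 𝓝 y₀, ∀ z ∈ K, c < h (y, z) := by
  have hslice : ContinuousOn (fun z => h (y₀, z)) K := fun z hz =>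
    ((hc z hz).comp (f := fun z => (y₀, z)) (by fun_prop)).continuousWithinAt
  obtain ⟨a, ha, hmin⟩ := hK.exists_forall_le' hslice hpos
  refine ⟨a / 2, half_pos ha, hK.eventually_forall_of_forall_eventually fun z hz => ?_⟩
  exact (hc z hz).eventually_const_lt ((half_lt_self ha).trans_le (hmin z hz))

end OpenMaps

section OneVariable

theorem eventually_deriv_ne_zero_of_not_eventually_eq {𝕜 F : Type*}
    [NontriviallyNormedField 𝕜] [CharZero 𝕜] [NormedAddCommGroup F] [NormedSpace 𝕜 F]
    [CompleteSpace F] {f : 𝕜 → F} {z : 𝕜} (hf : AnalyticAt 𝕜 f z) (hne : ¬ ∀ᶠ w in 𝓝 z, f w = f z) :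
    ∀ᶠ w in 𝓝[≠] z, deriv f w ≠ 0 := by
  refine hf.deriv.eventually_eq_zero_or_eventually_ne_zero.resolve_left fun hzero => hne ?_
  have horder := hf.analyticOrderAt_deriv_add_one
  rw [analyticOrderAt_eq_top.2 hzero, top_add, eq_comm, analyticOrderAt_eq_top] at horder
  exact horder.mono fun w hw => sub_eq_zero.1 hw

variable {f : ℂ → ℂ} {s : Set ℂ} {z : ℂ}

/- The inverse of an injective holomorphic function is continuous, and holomorphic off the isolated
critical values, so it is holomorphic by removability; then apply the chain rule. -/
theorem deriv_ne_zero_of_injOn (hs : IsOpen s) (hf : DifferentiableOn ℂ f s) (hi : InjOn f s)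
    (hz : z ∈ s) : deriv f z ≠ 0 := by
  have han : AnalyticOnNhd ℂ f s := hf.analyticOnNhd hs
  have hconst {w : ℂ} (hw : w ∈ s) := not_eventually_eq_of_injOn (hs.mem_nhds hw) hi
  obtain ⟨e, rfl, rfl⟩ := exists_openPartialHomeomorph_of_injOn hs hf.continuousOn hi fun w hw =>
    (han w hw).eventually_constant_or_nhds_le_map_nhds.resolve_left (hconst hw)
  have htarget : e z ∈ e.target := e.map_source hz
  have hsymm : Tendsto e.symm (𝓝[≠] (e z)) (𝓝[≠] z) :=
    tendsto_nhdsWithin_of_tendsto_nhds_of_eventually_within _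
      ((e.tendsto_symm hz).mono_left nhdsWithin_le_nhds) <| by
        filter_upwards [self_mem_nhdsWithin,
          nhdsWithin_le_nhds (e.open_target.mem_nhds htarget)] with w hw hwt heq
        exact hw (by rw [mem_singleton_iff, ← heq, e.right_inv hwt])
  have hpunctured : ∀ᶠ w in 𝓝[≠] (e z), DifferentiableAt ℂ e.symm w := by
    filter_upwards [nhdsWithin_le_nhds (e.open_target.mem_nhds htarget),
      hsymm.eventually (eventually_deriv_ne_zero_of_not_eventually_eq (han z hz) (hconst hz))]
      with w hwt hw
    exact (e.hasDerivAt_symm hwt hw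
      (han _ (e.map_target hwt)).differentiableAt.hasDerivAt).differentiableAt
  have hinv : DifferentiableAt ℂ e.symm (e z) :=
    (Complex.analyticAt_of_differentiable_on_punctured_nhds_of_continuousAt hpunctured
      (e.continuousAt_symm htarget)).differentiableAt
  have hchain : deriv e.symm (e z) * deriv e z = 1 :=
    (hinv.hasDerivAt.comp z (han z hz).differentiableAt.hasDerivAt).unique <|
      (hasDerivAt_id z).congr_of_eventuallyEq (e.eventually_left_inverse hz)
  exact right_ne_zero_of_mul_eq_one hchain

theorem ball_subset_image_closedBall_of_analyticOnNhd {ε r : ℝ} (hr : 0 < r) (hε : 0 < ε)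
    (hf : AnalyticOnNhd ℂ f (closedBall z r)) (hbound : ∀ w ∈ sphere z r, ε ≤ ‖f w - f z‖) :
    ball (f z) (ε / 2) ⊆ f '' closedBall z r := by
  refine DiffContOnCl.ball_subset_image_closedBall
    (hf.differentiableOn.diffContOnCl_ball subset_rfl) hr hbound (not_eventually.1 fun hconst => ?_)
  have hEq : EqOn f (fun _ => f z) (closedBall z r) :=
    hf.eqOn_of_preconnected_of_eventuallyEq analyticOnNhd_const
      (convex_closedBall z r).isPreconnected (mem_closedBall_self hr.le) hconst
  obtain ⟨w, hw⟩ : (sphere z r).Nonempty := NormedSpace.sphere_nonempty.2 hr.le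
  have hε0 : ε ≤ 0 := by simpa [hEq (sphere_subset_closedBall hw)] using hbound w hw
  exact hε.not_ge hε0

/- Hurwitz's theorem in the form of an open mapping theorem with a parameter: the lower bound for
`‖G (y₀, ζ) - G (y₀, z)‖` on a small circle persists for nearby `y`. -/
theorem nhds_prodMk_le_map_of_eventually_analyticAt {Y : Type*} [TopologicalSpace Y]
    {G : Y × ℂ → ℂ} {y₀ : Y} (hc : ∀ᶠ p in 𝓝 (y₀, z), ContinuousAt G p)
    (han : ∀ᶠ p in 𝓝 (y₀, z), AnalyticAt ℂ (fun ζ => G (p.1, ζ)) p.2)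
    (hne : ∀ᶠ ζ in 𝓝[≠] z, G (y₀, ζ) ≠ G (y₀, z)) :
    𝓝 (y₀, G (y₀, z)) ≤ map (fun p => (p.1, G p)) (𝓝 (y₀, z)) := by
  intro t ht
  obtain ⟨P, hP, Q, hQ, hPQ⟩ := eventually_prod_iff.1 <|
    (hc.and (han.and (mem_map.1 ht))).filter_mono nhds_prod_eq.ge
  obtain ⟨ρ, hρ, hball⟩ :=
    nhds_basis_closedBall.eventually_iff.1 (hQ.and (eventually_nhdsWithin_iff.1 hne))
  have hcenter : ∀ y, P y → ContinuousAt G (y, z) := fun y hy => (hPQ hy hQ.self_of_nhds).1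
  have hdist : ∀ ζ ∈ sphere z ρ,
      ContinuousAt (fun p : Y × ℂ => ‖G p - G (p.1, z)‖) (y₀, ζ) := fun ζ hζ =>
    ((hPQ hP.self_of_nhds (hball (sphere_subset_closedBall hζ)).1).1.sub
      ((hcenter y₀ hP.self_of_nhds).comp (f := fun p : Y × ℂ => (p.1, z)) (x := (y₀, ζ))
        (by fun_prop))).norm
  have hdist_pos : ∀ ζ ∈ sphere z ρ, 0 < ‖G (y₀, ζ) - G (y₀, z)‖ := fun ζ hζ =>
    norm_sub_pos_iff.2 <|
      (hball (sphere_subset_closedBall hζ)).2 (ne_of_mem_sphere hζ hρ.ne')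
  obtain ⟨c, hc0, hbound⟩ :=
    exists_pos_eventually_forall_lt_of_isCompact (isCompact_sphere z ρ) hdist hdist_pos
  have hnear : ∀ᶠ q : Y × ℂ in 𝓝 (y₀, G (y₀, z)), q.2 ∈ ball (G (q.1, z)) (c / 2) := by
    have hcdist : ContinuousAt (fun q : Y × ℂ => dist q.2 (G (q.1, z))) (y₀, G (y₀, z)) :=
      continuousAt_snd.dist <| (hcenter y₀ hP.self_of_nhds).comp
        (f := fun q : Y × ℂ => (q.1, z)) (x := (y₀, G (y₀, z))) (by fun_prop)
    exact hcdist.eventually_lt_const (by simpa using half_pos hc0)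
  filter_upwards [hnear, (hP.and hbound).prod_inl_nhds _] with ⟨y, w⟩ hw ⟨hPy, hy⟩
  obtain ⟨ζ, hζ, hζw⟩ := ball_subset_image_closedBall_of_analyticOnNhd hρ hc0
    (fun ζ hζ => (hPQ hPy (hball hζ).1).2.1) (fun ζ hζ => (hy ζ hζ).le) hw
  have hmem : (y, G (y, ζ)) ∈ t := (hPQ hPy (hball hζ).1).2.2
  rwa [show G (y, ζ) = w from hζw] at hmem

end OneVariable

namespace IsBiholoOn

variable {E₁ E₂ : Type*} [NormedAddCommGroup E₁] [NormedSpace ℂ E₁]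
  [NormedAddCommGroup E₂] [NormedSpace ℂ E₂] {f g : E₁ → E₂} {s : Set E₁}

theorem congr (hf : IsBiholoOn f s) (h : EqOn g f s) : IsBiholoOn g s := by
  obtain ⟨hd, hi, k, hk, hkf⟩ := hf
  exact ⟨hd.congr h, h.injOn_iff.2 hi, k, by rwa [h.image_eq], fun x hx => by rw [h hx, hkf x hx]⟩

theorem of_subsingleton [Subsingleton E₁] : IsBiholoOn f s :=
  ⟨fun x _ => (hasFDerivAt_of_subsingleton f x).differentiableAt.differentiableWithinAt,
    injOn_of_subsingleton f s, fun _ => 0, differentiableOn_const 0,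
    fun _ _ => Subsingleton.elim _ _⟩

theorem of_hasFDerivAt_equiv (hs : IsOpen s) (hi : InjOn f s)
    (hd : ∀ x ∈ s, ∃ e : E₁ ≃L[ℂ] E₂, HasFDerivAt f (e : E₁ →L[ℂ] E₂) x)
    (ho : ∀ x ∈ s, 𝓝 (f x) ≤ map f (𝓝 x)) : IsBiholoOn f s := by
  have hdiff : DifferentiableOn ℂ f s := fun x hx =>
    (hd x hx).elim fun _ he => he.differentiableAt.differentiableWithinAt
  obtain ⟨e, rfl, rfl⟩ := exists_openPartialHomeomorph_of_injOn hs hdiff.continuousOn hi ho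
  refine ⟨hdiff, hi, e.symm, ?_, fun x hx => e.left_inv hx⟩
  rw [e.image_source_eq_target]
  intro y hy
  obtain ⟨f', hf'⟩ := hd (e.symm y) (e.map_target hy)
  exact (e.hasFDerivAt_symm hy hf').differentiableAt.differentiableWithinAt

end IsBiholoOn

/-- The function `f_u(ζ) = ζ f(ζ u)`, which is the map `x ↦ f x • x` on the line spanned by `u`,
read in the coordinate `ζ`. -/
def radialSlice {𝕜 X : Type*} [Mul 𝕜] [SMul 𝕜 X] (f : X → 𝕜) (u : X) (ζ : 𝕜) : 𝕜 :=
  ζ * f (ζ • u)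

section RadialSliceAlgebra

variable {𝕜 X : Type*} [Field 𝕜] [AddCommGroup X] [Module 𝕜 X] {f : X → 𝕜} {s : Set X} {u : X}

theorem radialSlice_smul_eq (f : X → 𝕜) (u : X) (ζ : 𝕜) :
    radialSlice f u ζ • u = f (ζ • u) • ζ • u := by
  rw [radialSlice, smul_smul, mul_comm]

theorem injOn_radialSlice (hF : InjOn (fun x => f x • x) s) (hu : u ≠ 0) :
    InjOn (radialSlice f u) ((· • u) ⁻¹' s) := by
  intro a ha b hb hab
  refine smul_left_injective 𝕜 hu (hF ha hb ?_)
  simp only [← radialSlice_smul_eq, hab]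

theorem injOn_radialSlice_smul (h : InjOn (radialSlice f u) ((· • u) ⁻¹' s)) {c : 𝕜}
    (hc : c ≠ 0) : InjOn (radialSlice f (c • u)) ((· • c • u) ⁻¹' s) := by
  have hscale (ζ : 𝕜) : radialSlice f u (ζ * c) = radialSlice f (c • u) ζ * c := by
    simp only [radialSlice, mul_smul]
    ring
  intro a ha b hb hab
  simp only [mem_preimage, ← mul_smul] at ha hb
  exact mul_right_cancel₀ hc (h ha hb (by rw [hscale, hscale, hab]))

theorem ne_zero_of_injOn_radialSlice (h0 : (0 : X) ∈ s)
    (h : InjOn (radialSlice f u) ((· • u) ⁻¹' s)) (hu : u ∈ s) : f u ≠ 0 := by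
  intro hfu
  have h10 : (1 : 𝕜) = 0 := h (by simpa) (by simpa) (by simp [radialSlice, hfu])
  exact one_ne_zero h10

theorem injOn_smul_self_of_injOn_radialSlice (hne : ∀ x ∈ s, f x ≠ 0)
    (h : ∀ u ∈ s, InjOn (radialSlice f u) ((· • u) ⁻¹' s)) : InjOn (fun x => f x • x) s := by
  intro x hx y hy (hxy : f x • x = f y • y)
  obtain ⟨t, hyx, ht⟩ : ∃ t : 𝕜, y = t • x ∧ t * f y = f x :=
    ⟨(f y)⁻¹ * f x, by rw [mul_smul, hxy, inv_smul_smul₀ (hne y hy)],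
      by rw [mul_right_comm, inv_mul_cancel₀ (hne y hy), one_mul]⟩
  have h1t : 1 = t := h x hx (by simpa) (by simpa [← hyx]) (by simp [radialSlice, ← hyx, ht])
  rw [hyx, ← h1t, one_smul]

end RadialSliceAlgebra

section RadialDerivative

variable {𝕜 X : Type*} [NontriviallyNormedField 𝕜] [NormedAddCommGroup X] [NormedSpace 𝕜 X]

theorem exists_continuousLinearEquiv_eq_smul_id_add_smulRight {a : 𝕜} {L : X →L[𝕜] 𝕜} {x : X}
    (ha : a ≠ 0) (hb : a + L x ≠ 0) :
    ∃ e : X ≃L[𝕜] X, (e : X →L[𝕜] X) = a • ContinuousLinearMap.id 𝕜 X + L.smulRight x := by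
  refine ⟨.equivOfInverse (a • .id 𝕜 X + L.smulRight x)
    (a⁻¹ • (.id 𝕜 X - (a + L x)⁻¹ • L.smulRight x)) (fun v => ?_) (fun v => ?_), rfl⟩ <;>
  · simp only [add_apply, sub_apply, smul_apply, ContinuousLinearMap.id_apply,
      ContinuousLinearMap.smulRight_apply, map_add, map_sub, map_smul]
    match_scalars <;> field_simp
    ring

theorem hasDerivAt_radialSlice {f : X → 𝕜} {u : X} {ζ : 𝕜} {L : X →L[𝕜] 𝕜}
    (hf : HasFDerivAt f L (ζ • u)) : HasDerivAt (radialSlice f u) (f (ζ • u) + ζ * L u) ζ := by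
  have hline : HasDerivAt (fun ξ : 𝕜 => ξ • u) u ζ := by
    simpa using (hasDerivAt_id ζ).smul_const u
  simpa [radialSlice] using! (hasDerivAt_id ζ).mul (hf.comp_hasDerivAt ζ hline)

theorem differentiableOn_radialSlice {f : X → 𝕜} {s : Set X} (hs : IsOpen s)
    (hf : DifferentiableOn 𝕜 f s) (u : X) :
    DifferentiableOn 𝕜 (radialSlice f u) ((· • u) ⁻¹' s) := fun _ hζ =>
  (hasDerivAt_radialSlice (hf.differentiableAt (hs.mem_nhds hζ)).hasFDerivAt)
    |>.differentiableAt.differentiableWithinAt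

theorem exists_hasFDerivAt_equiv_smul_self {f : X → 𝕜} {x : X} {L : X →L[𝕜] 𝕜}
    (hf : HasFDerivAt f L x) (hfx : f x ≠ 0) (hL : f x + L x ≠ 0) :
    ∃ e : X ≃L[𝕜] X, HasFDerivAt (fun z => f z • z) (e : X →L[𝕜] X) x := by
  obtain ⟨e, he⟩ := exists_continuousLinearEquiv_eq_smul_id_add_smulRight hfx hL
  exact ⟨e, he ▸ hf.smul (hasFDerivAt_id x)⟩

theorem preimage_smul_ball_zero {u : X} (hu : ‖u‖ = 1) (r : ℝ) :
    (· • u : 𝕜 → X) ⁻¹' ball 0 r = ball 0 r := by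
  ext ζ
  simp [norm_smul, hu]

end RadialDerivative

section Biholomorphy

variable {X : Type*} [NormedAddCommGroup X] [NormedSpace ℂ X] {f : X → ℂ} {s : Set X}

/- The equation `f z • z = v` is solved on the line through `y = (f x)⁻¹ • v`: for `z = ζ • y` it
reads `radialSlice f y ζ = f x`, which has a root near `1` because `y` is near `x`. -/
theorem nhds_smul_self_le_map {x : X} {L : X →L[ℂ] ℂ}
    (hf : ∀ᶠ z in 𝓝 x, DifferentiableAt ℂ f z) (hL : HasFDerivAt f L x) (hfx : f x ≠ 0)
    (hne : f x + L x ≠ 0) :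
    𝓝 (f x • x) ≤ map (fun z => f z • z) (𝓝 x) := by
  have hsmul : Tendsto (fun p : X × ℂ => p.2 • p.1) (𝓝 (x, 1)) (𝓝 x) := by
    have hcsmul : Continuous fun p : X × ℂ => p.2 • p.1 := by fun_prop
    simpa using hcsmul.tendsto (x, 1)
  have hslice : HasDerivAt (radialSlice f x) (f x + L x) 1 := by
    simpa using hasDerivAt_radialSlice (f := f) (u := x) (ζ := 1) (by simpa using hL)
  have hcont : ∀ᶠ p : X × ℂ in 𝓝 (x, 1), ContinuousAt (fun p => radialSlice f p.1 p.2) p := by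
    filter_upwards [hsmul.eventually hf] with p hp
    exact continuousAt_snd.mul (hp.continuousAt.comp (f := fun p : X × ℂ => p.2 • p.1)
      (by fun_prop))
  have hanalytic : ∀ᶠ p : X × ℂ in 𝓝 (x, 1), AnalyticAt ℂ (radialSlice f p.1) p.2 := by
    filter_upwards [hsmul.eventually hf.eventually_nhds] with p hp
    have hline : ContinuousAt (fun ζ : ℂ => ζ • p.1) p.2 := by fun_prop
    refine Complex.analyticAt_iff_eventually_differentiableAt.2 ?_
    filter_upwards [hline.eventually hp] with ζ hζ
    exact (hasDerivAt_radialSlice hζ.hasFDerivAt).differentiableAt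
  have hopen :=
    nhds_prodMk_le_map_of_eventually_analyticAt hcont hanalytic (hslice.eventually_ne hne)
  have hscale : Tendsto (fun v => ((f x)⁻¹ • v, f x)) (𝓝 (f x • x)) (𝓝 (x, radialSlice f x 1)) := by
    have hcscale : Continuous fun v : X => ((f x)⁻¹ • v, f x) := by fun_prop
    simpa [radialSlice, inv_smul_smul₀ hfx] using hcscale.tendsto (f x • x)
  intro t ht
  filter_upwards [hscale (hopen (image_mem_map (hsmul ht)))] with v ⟨⟨y, ζ⟩, hmem, hroot⟩
  obtain ⟨rfl, hζ⟩ : y = (f x)⁻¹ • v ∧ radialSlice f y ζ = f x := Prod.mk.inj hroot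
  simpa only [mem_preimage, ← radialSlice_smul_eq, hζ, smul_inv_smul₀ hfx] using hmem

theorem add_mul_fderiv_ne_zero_of_injOn_radialSlice {u : X} {ζ : ℂ} (hs : IsOpen s)
    (hf : DifferentiableOn ℂ f s) (h : InjOn (radialSlice f u) ((· • u) ⁻¹' s)) (hζ : ζ • u ∈ s) :
    f (ζ • u) + ζ * fderiv ℂ f (ζ • u) u ≠ 0 := by
  have hopen : IsOpen ((· • u : ℂ → X) ⁻¹' s) := hs.preimage (by fun_prop)
  rw [← (hasDerivAt_radialSlice (hf.differentiableAt (hs.mem_nhds hζ)).hasFDerivAt).deriv]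
  exact deriv_ne_zero_of_injOn hopen (differentiableOn_radialSlice hs hf u) h hζ

theorem isBiholoOn_smul_self_of_injOn_radialSlice (hs : IsOpen s) (h0 : (0 : X) ∈ s)
    (hf : DifferentiableOn ℂ f s) (h : ∀ u, InjOn (radialSlice f u) ((· • u) ⁻¹' s)) :
    IsBiholoOn (fun x => f x • x) s := by
  have hne : ∀ x ∈ s, f x ≠ 0 := fun x hx => ne_zero_of_injOn_radialSlice h0 (h x) hx
  have hfd : ∀ x ∈ s, HasFDerivAt f (fderiv ℂ f x) x := fun x hx =>
    (hf.differentiableAt (hs.mem_nhds hx)).hasFDerivAt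
  have hradial : ∀ x ∈ s, f x + fderiv ℂ f x x ≠ 0 := fun x hx => by
    simpa using add_mul_fderiv_ne_zero_of_injOn_radialSlice hs hf (h x) (ζ := 1) (by simpa)
  exact .of_hasFDerivAt_equiv hs (injOn_smul_self_of_injOn_radialSlice hne fun u _ => h u)
    (fun x hx => exists_hasFDerivAt_equiv_smul_self (hfd x hx) (hne x hx) (hradial x hx))
    (fun x hx => nhds_smul_self_le_map (hf.eventually_differentiableAt (hs.mem_nhds hx))
      (hfd x hx) (hne x hx) (hradial x hx))

theorem injOn_radialSlice_of_forall_norm_eq_one [Nontrivial X] (hs : IsOpen s) (h0 : (0 : X) ∈ s)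
    (hf : DifferentiableOn ℂ f s)
    (h : ∀ u, ‖u‖ = 1 → InjOn (radialSlice f u) ((· • u) ⁻¹' s)) (u : X) :
    InjOn (radialSlice f u) ((· • u) ⁻¹' s) := by
  rcases eq_or_ne u 0 with rfl | hu
  · obtain ⟨v, hv⟩ := exists_norm_eq X zero_le_one
    have hf0 : f 0 ≠ 0 := by
      simpa using add_mul_fderiv_ne_zero_of_injOn_radialSlice hs hf (h v hv) (ζ := 0) (by simpa)
    intro a _ b _ hab
    simpa [radialSlice, hf0] using hab
  · have hnorm : (‖u‖ : ℂ) ≠ 0 := by simpa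
    simpa [smul_inv_smul₀ hnorm] using
      injOn_radialSlice_smul (h ((‖u‖ : ℂ)⁻¹ • u) (norm_smul_inv_norm hu)) hnorm

theorem stmt0_general (hs : IsOpen s) (h0 : (0 : X) ∈ s) (hf : DifferentiableOn ℂ f s)
    {F : X → X} (hF : ∀ x ∈ s, F x = f x • x) :
    IsBiholoOn F s ↔
      ∀ u : X, ‖u‖ = 1 →
        DifferentiableOn ℂ (radialSlice f u) ((· • u) ⁻¹' s) ∧
        InjOn (radialSlice f u) ((· • u) ⁻¹' s) := by
  constructor
  · rintro ⟨-, hi, -⟩ u hu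
    have hu0 : u ≠ 0 := norm_ne_zero_iff.1 (hu ▸ one_ne_zero)
    exact ⟨differentiableOn_radialSlice hs hf u, injOn_radialSlice (hi.congr hF) hu0⟩
  · intro h
    rcases subsingleton_or_nontrivial X with _ | _
    · exact .of_subsingleton
    · exact (isBiholoOn_smul_self_of_injOn_radialSlice hs h0 hf
        (injOn_radialSlice_of_forall_norm_eq_one hs h0 hf fun u hu => (h u hu).2)).congr hF

end Biholomorphy

/-- **Univalence criterion.** Let `F(x) = f(x)·x` on the unit ball `𝔹` of a complex Banach
space `X`, with `f` holomorphic on `𝔹`, and let `0 < r ≤ 1`. Then `F` is biholomorphic on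
`B_r` if and only if, for every `u` with `‖u‖ = 1`, the function `f_u(ζ) = ζ·f(ζu)` is
univalent (injective and holomorphic) on the disc `𝕌_r`. -/
theorem stmt0 {X : Type*} [NormedAddCommGroup X] [NormedSpace ℂ X] [CompleteSpace X]
    (r : ℝ) (hr : r ∈ Set.Ioc (0 : ℝ) 1)
    (f : X → ℂ) (hf : DifferentiableOn ℂ f (ball (0 : X) 1))
    (F : X → X) (hF : ∀ x ∈ ball (0 : X) 1, F x = f x • x) :
    IsBiholoOn F (ball (0 : X) r) ↔
      ∀ u : X, ‖u‖ = 1 →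
        DifferentiableOn ℂ (fun ζ : ℂ => ζ * f (ζ • u)) (ball (0 : ℂ) r) ∧
        Set.InjOn (fun ζ : ℂ => ζ * f (ζ • u)) (ball (0 : ℂ) r) := by
  refine (stmt0_general isOpen_ball (mem_ball_self hr.1) (hf.mono (ball_subset_ball hr.2))
    fun x hx => hF x (ball_subset_ball hr.2 hx)).trans (forall₂_congr fun u hu => ?_)
  rw [preimage_smul_ball_zero hu]
  rfl
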